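/- Let n ≥ 1 and let M be an n-manifold with boundary. Suppose A, B, C : Set M satisfy A ∪ B = Set.univ and A ∩ B = C, and each of A, B, C (with the subspace topology) is homeomorphic to Bⁿ. Then Int(A) ∩ Int(B) = Int(C). -/

import Mathlib

noncomputable section

/-- The closed half-space `Hⁿ = {y : ℝⁿ | y 0 ≥ 0}`. -/
def HalfSpace {n : ℕ} (hn : 1 ≤ n) : Set (EuclideanSpace ℝ (Fin n)) :=
  {y | 0 ≤ y ⟨0, hn⟩}

/-- An `n`-manifold with boundary: every point has an open neighborhood homeomorphic
(as a subspace) to an open subset of the half-space `Hⁿ`.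
(The Hausdorff condition is imposed separately via `T2Space`.) -/
def LocallyHalfSpace {n : ℕ} (hn : 1 ≤ n) (M : Type) [TopologicalSpace M] : Prop :=
  ∀ x : M, ∃ (U : Set M) (V : Set (HalfSpace hn)),
    x ∈ U ∧ IsOpen U ∧ IsOpen V ∧ Nonempty (↥U ≃ₜ ↥V)

/-- The manifold interior of a subset `S` of `M`: points `x ∈ S` admitting `U` with
`x ∈ U ⊆ S`, `U` open in the subspace topology of `S`, and `U` homeomorphic to `ℝⁿ`. -/
def mInt (n : ℕ) {M : Type} [TopologicalSpace M] (S : Set M) : Set M :=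
  {x | x ∈ S ∧ ∃ U : Set M, x ∈ U ∧ U ⊆ S ∧
    IsOpen (Subtype.val ⁻¹' U : Set S) ∧
    Nonempty (↥U ≃ₜ EuclideanSpace ℝ (Fin n))}

/-!
A subset of `M` homeomorphic to `ℝⁿ` is open in `M`, by invariance of domain. The manifold interior
of `S` is therefore the intersection of the topological interior of `S` with the manifold interior
of `M`, and topological interiors commute with finite intersections.

Invariance of domain is deduced from Brouwer's fixed point theorem (Kulpa, Tao). Let `g` extend the
inverse of an injective `f` on the closed unit ball. If the image of `f` missed a point `c` near
`f 0`, a perturbation of `g` composed with `f`, pushed away from `c`, would be a map of the ball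
close to the identity but without zeros.

Brouwer's theorem follows from the absence of `C¹` retractions `f` of the ball onto its boundary
(Milnor, Rogers): the integral of `det (1 + t (Df - 1))` over the ball is a polynomial in `t`, equal
to the volume of the ball for small `t ≥ 0` because `x + t (f x - x)` then permutes the ball, and
zero for `t = 1` because `Df` is singular.
-/

open MeasureTheory Metric Set Topology

section SmoothNoRetraction

variable {E : Type*} [NormedAddCommGroup E] [NormedSpace ℝ E]

lemma exists_polynomial_integral_eval {X : Type*} [MeasurableSpace X] {μ : Measure X}
    {p : X → Polynomial ℝ} {d : ℕ} (hd : ∀ x, (p x).natDegree ≤ d)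
    (hp : ∀ t, Integrable (fun x => (p x).eval t) μ) :
    ∃ q : Polynomial ℝ, ∀ t, ∫ x, (p x).eval t ∂μ = q.eval t := by
  let nodes := Finset.range (d + 1)
  let v : ℕ → ℝ := Nat.cast
  have interpolation (x : X) :
      p x = Lagrange.interpolate nodes v fun i => (p x).eval (v i) := by
    refine Lagrange.eq_interpolate Nat.cast_injective.injOn ?_
    rw [Finset.card_range]
    exact (Polynomial.degree_le_of_natDegree_le (hd x)).trans_lt (by exact_mod_cast d.lt_succ_self)
  refine ⟨Lagrange.interpolate nodes v fun i => ∫ x, (p x).eval (v i) ∂μ, fun t => ?_⟩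
  calc
    ∫ x, (p x).eval t ∂μ
        = ∫ x, ∑ i ∈ nodes, (p x).eval (v i) * (Lagrange.basis nodes v i).eval t ∂μ := by
      refine integral_congr_ae (.of_forall fun x => ?_)
      refine (congrArg (Polynomial.eval t) (interpolation x)).trans ?_
      simp only [Lagrange.interpolate_apply, Polynomial.eval_finsetSum, Polynomial.eval_mul,
        Polynomial.eval_C]
    _ = ∑ i ∈ nodes, (∫ x, (p x).eval (v i) ∂μ) * (Lagrange.basis nodes v i).eval t := by
      rw [integral_finsetSum _ fun i _ => (hp (v i)).mul_const _]
      simp only [integral_mul_const]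
    _ = _ := by
      simp only [Lagrange.interpolate_apply, Polynomial.eval_finsetSum, Polynomial.eval_mul,
        Polynomial.eval_C]

lemma exists_polynomial_det_id_add_smul {R V : Type*} [CommRing R] [AddCommGroup V] [Module R V]
    [Module.Free R V] [Module.Finite R V] (L : V →ₗ[R] V) :
    ∃ p : Polynomial R, p.natDegree ≤ Module.finrank R V ∧
      ∀ t : R, LinearMap.det (LinearMap.id + t • L) = p.eval t := by
  nontriviality R
  let b := Module.finBasis R V
  let A := LinearMap.toMatrix b b L
  refine ⟨((Polynomial.X : Polynomial R) • A.map Polynomial.C +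
    (1 : Matrix _ _ R).map Polynomial.C).det, ?_, fun t => ?_⟩
  · simpa only [Fintype.card_fin] using Polynomial.natDegree_det_X_add_C_le A 1
  · rw [← LinearMap.det_toMatrix b, ← Polynomial.coe_evalRingHom, RingHom.map_det, map_add,
      map_smul, LinearMap.toMatrix_id, add_comm]
    congr 1
    ext i j
    obtain rfl | hij := eq_or_ne i j <;> simp [A, mul_comm t, *]

lemma det_id_add_pos [FiniteDimensional ℝ E] {L : E →L[ℝ] E} (hL : ‖L‖ < 1) :
    0 < (ContinuousLinearMap.id ℝ E + L).det := by
  let δ : ℝ → ℝ := fun s => (ContinuousLinearMap.id ℝ E + s • L).det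
  have δ_ne_zero : ∀ s ∈ Icc (0 : ℝ) 1, δ s ≠ 0 := by
    intro s hs
    have hsL : ‖-(s • L)‖ < 1 := by
      rw [norm_neg, norm_smul, Real.norm_of_nonneg hs.1]
      exact (mul_le_of_le_one_left (norm_nonneg L) hs.2).trans_lt hL
    have hunit : IsUnit (1 + s • L) := by
      simpa only [sub_neg_eq_add] using isUnit_one_sub_of_norm_lt_one hsL
    exact (LinearMap.isUnit_det _
      (hunit.map ContinuousLinearMap.toLinearMapRingHom)).ne_zero
  have δ_continuous : Continuous δ := ContinuousLinearMap.continuous_det.comp (by fun_prop)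
  have δ_zero : δ 0 = 1 := by simp [δ, ContinuousLinearMap.det]
  suffices 0 < δ 1 by simpa only [δ, one_smul] using this
  by_contra! hneg
  obtain ⟨s, hs, hs0⟩ := intermediate_value_Icc' zero_le_one δ_continuous.continuousOn
    ⟨hneg, δ_zero ▸ zero_le_one⟩
  exact δ_ne_zero s hs hs0

lemma bijective_id_add_of_lipschitzWith [CompleteSpace E] {K : NNReal} (hK : K < 1) {g : E → E}
    (hg : LipschitzWith K g) : Function.Bijective fun x => x + g x := by
  have happrox : ApproximatesLinearOn (fun x => x + g x)
      (ContinuousLinearEquiv.refl ℝ E : E →L[ℝ] E) univ K := by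
    rw [ApproximatesLinearOn.approximatesLinearOn_iff_lipschitzOnWith, lipschitzOnWith_univ]
    convert hg using 1
    ext x
    simp
  have hK' : Subsingleton E ∨
      K < ‖((ContinuousLinearEquiv.refl ℝ E).symm : E →L[ℝ] E)‖₊⁻¹ := by
    cases subsingleton_or_nontrivial E
    · exact .inl ‹_›
    · right
      simpa using hK
  exact ⟨injOn_univ.1 (happrox.injOn hK'), happrox.surjective hK'⟩

lemma inter_frontier_nonempty_of_isPreconnected {X : Type*} [TopologicalSpace X] {s t : Set X}
    (ht : IsPreconnected t) (hin : (t ∩ s).Nonempty) (hout : (t \ s).Nonempty) :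
    (t ∩ frontier s).Nonempty := by
  by_contra! hdisj
  have := isPreconnected_iff_preconnectedSpace.1 ht
  obtain ⟨x, hxt, hxs⟩ := hin
  obtain ⟨y, hyt, hys⟩ := hout
  have hx : x ∈ interior s := by
    by_contra h
    exact hdisj.subset ⟨hxt, subset_closure hxs, h⟩
  rcases isClopen_iff.1 (isClopen_preimage_val isOpen_interior
    ((disjoint_iff_inter_eq_empty.2 hdisj).symm.mono_left frontier_interior_subset)) with h | h
  · exact h.subset (show ⟨x, hxt⟩ ∈ _ from hx)
  · exact hys (interior_subset (h.superset (mem_univ ⟨y, hyt⟩)))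

lemma lipschitzWith_indicator_of_frontier_eq_zero {F : Type*} [NormedAddCommGroup F] {K : NNReal}
    {s : Set E} (hs : IsClosed s) {g : E → F} (hg : LipschitzOnWith K g s)
    (hfrontier : ∀ x ∈ frontier s, g x = 0) : LipschitzWith K (s.indicator g) := by
  have crossing {x y : E} (hx : x ∈ s) (hy : y ∉ s) : ‖g x‖ ≤ K * ‖x - y‖ := by
    obtain ⟨z, hz, hzs⟩ := inter_frontier_nonempty_of_isPreconnected
      (convex_segment x y).isPreconnected ⟨x, left_mem_segment ℝ x y, hx⟩
      ⟨y, right_mem_segment ℝ x y, hy⟩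
    calc
      ‖g x‖ = ‖g x - g z‖ := by rw [hfrontier z hzs, sub_zero]
      _ ≤ K * ‖x - z‖ := hg.norm_sub_le hx (hs.frontier_subset hzs)
      _ ≤ K * ‖x - y‖ := by
        rw [norm_sub_rev x z, norm_sub_rev x y]
        gcongr
        exact norm_sub_le_of_mem_segment hz
  refine LipschitzWith.of_dist_le_mul fun x y => ?_
  rw [dist_eq_norm, dist_eq_norm]
  by_cases hx : x ∈ s <;> by_cases hy : y ∈ s
  · simpa only [indicator_of_mem, hx, hy] using hg.norm_sub_le hx hy
  · simpa [hx, hy] using crossing hx hy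
  · simpa [hx, hy, norm_sub_rev x y] using crossing hy hx
  · simp only [indicator_of_notMem, hx, hy, not_false_eq_true, sub_zero, norm_zero]
    positivity

variable [FiniteDimensional ℝ E]

lemma setIntegral_det_id_add_eq_measureReal_of_nnnorm_le [MeasurableSpace E] [BorelSpace E]
    (μ : Measure E) [μ.IsAddHaarMeasure] {s : Set E} (hs : IsClosed s) (hconv : Convex ℝ s)
    {g : E → E} {A : E → E →L[ℝ] E} (hg : ∀ x ∈ s, HasFDerivWithinAt g (A x) s x)
    {K : NNReal} (hK : K < 1) (hA : ∀ x ∈ s, ‖A x‖₊ ≤ K) (hfrontier : ∀ x ∈ frontier s, g x = 0) :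
    ∫ x in s, (ContinuousLinearMap.id ℝ E + A x).det ∂μ = μ.real s := by
  let F : E → E := fun x => x + s.indicator g x
  have F_bijective : Function.Bijective F :=
    bijective_id_add_of_lipschitzWith hK <| lipschitzWith_indicator_of_frontier_eq_zero hs
      (hconv.lipschitzOnWith_of_nnnorm_hasFDerivWithin_le hg hA) hfrontier
  have image_F : F '' s = s := by
    have image_compl : F '' sᶜ = sᶜ := by
      have : EqOn F id sᶜ := fun x hx => by simp [F, indicator_of_notMem hx]
      rw [this.image_eq, image_id]
    rw [← compl_inj_iff, ← image_compl_eq F_bijective, image_compl]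
  have F_deriv : ∀ x ∈ s, HasFDerivWithinAt F (ContinuousLinearMap.id ℝ E + A x) s x :=
    fun x hx => ((hasFDerivWithinAt_id x s).add (hg x hx)).congr
      (fun y hy => by simp [F, hy]) (by simp [F, hx])
  have det_pos : ∀ x ∈ s, 0 < (ContinuousLinearMap.id ℝ E + A x).det := fun x hx =>
    det_id_add_pos (lt_of_le_of_lt (by exact_mod_cast hA x hx) (NNReal.coe_lt_one.2 hK))
  calc
    ∫ x in s, (ContinuousLinearMap.id ℝ E + A x).det ∂μ
        = ∫ x in s, |(ContinuousLinearMap.id ℝ E + A x).det| • (1 : ℝ) ∂μ :=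
      setIntegral_congr_fun hs.measurableSet fun x hx => by simp [abs_of_pos (det_pos x hx)]
    _ = ∫ _ in F '' s, (1 : ℝ) ∂μ :=
      (integral_image_eq_integral_abs_det_fderiv_smul μ hs.measurableSet F_deriv
        F_bijective.injective.injOn fun _ => (1 : ℝ)).symm
    _ = μ.real s := by rw [image_F, setIntegral_const, smul_eq_mul, mul_one]

lemma exists_polynomial_setIntegral_det_id_add_smul {X : Type*}
    [TopologicalSpace X] [T2Space X] [MeasurableSpace X] [OpensMeasurableSpace X] {μ : Measure X}
    [IsFiniteMeasureOnCompacts μ] {s : Set X} (hs : IsCompact s) {A : X → E →L[ℝ] E}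
    (hA : ContinuousOn A s) : ∃ q : Polynomial ℝ, ∀ t : ℝ,
      ∫ x in s, (ContinuousLinearMap.id ℝ E + t • A x).det ∂μ = q.eval t := by
  choose p hdeg hp using fun x => exists_polynomial_det_id_add_smul (A x : E →ₗ[ℝ] E)
  have hdet (t : ℝ) (x : X) : (ContinuousLinearMap.id ℝ E + t • A x).det = (p x).eval t := hp x t
  simp only [hdet]
  refine exists_polynomial_integral_eval hdeg fun t => ?_
  simp only [← hdet]
  exact (ContinuousLinearMap.continuous_det.comp_continuousOn
    (continuousOn_const.add (hA.const_smul t))).integrableOn_compact hs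

lemma setIntegral_det_id_add_eq_measureReal [MeasurableSpace E] [BorelSpace E] (μ : Measure E)
    [μ.IsAddHaarMeasure] {s : Set E} (hs : IsCompact s) (hconv : Convex ℝ s) {g : E → E}
    {A : E → E →L[ℝ] E} (hg : ∀ x ∈ s, HasFDerivWithinAt g (A x) s x) (hA : ContinuousOn A s)
    (hfrontier : ∀ x ∈ frontier s, g x = 0) :
    ∫ x in s, (ContinuousLinearMap.id ℝ E + A x).det ∂μ = μ.real s := by
  obtain ⟨K, hK⟩ : ∃ K : NNReal, ∀ x ∈ s, ‖A x‖₊ ≤ K := by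
    obtain ⟨C, hC⟩ := hs.exists_bound_of_continuousOn hA
    exact ⟨C.toNNReal, fun x hx => NNReal.le_toNNReal_of_coe_le (hC x hx)⟩
  obtain ⟨p, hp⟩ := exists_polynomial_setIntegral_det_id_add_smul (μ := μ) hs hA
  have eval_p : ∀ t : NNReal, t * K < 1 → p.eval (t : ℝ) = μ.real s := by
    intro t ht
    rw [← hp]
    refine setIntegral_det_id_add_eq_measureReal_of_nnnorm_le μ hs.isClosed hconv
      (g := fun x => (t : ℝ) • g x) (fun x hx => (hg x hx).const_smul (t : ℝ)) ht
      (fun x hx => ?_) fun x hx => by rw [hfrontier x hx, smul_zero]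
    rw [nnnorm_smul, NNReal.nnnorm_eq]
    exact mul_le_mul_right (hK x hx) t
  have p_const : p = Polynomial.C (μ.real s) := by
    refine Polynomial.eq_of_infinite_eval_eq _ _ (.mono (fun t ht => ?_)
      (Ico_infinite (by positivity : (0 : ℝ) < 1 / (K + 1))))
    lift t to NNReal using ht.1
    have htK : (t * (K + 1) : ℝ) < 1 := (lt_div_iff₀ (by positivity)).1 ht.2
    rw [mem_ofPred_eq, Polynomial.eval_C]
    exact eval_p t ((mul_le_mul_right le_self_add t).trans_lt (by exact_mod_cast htK))
  simpa only [one_smul, p_const, Polynomial.eval_C] using hp 1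

lemma det_eq_zero_of_hasStrictFDerivAt_of_eventually_mem {f : E → E} {f' : E →L[ℝ] E}
    {x : E} (hf : HasStrictFDerivAt f f' x) {s : Set E} (hs : interior s = ∅)
    (hfs : ∀ᶠ y in 𝓝 x, f y ∈ s) : f'.det = 0 := by
  by_contra hdet
  have hsurj : f'.range = ⊤ := by
    rw [← LinearMap.isUnit_iff_range_eq_top, LinearMap.isUnit_iff_isUnit_det]
    exact isUnit_iff_ne_zero.2 hdet
  have : s ∈ 𝓝 (f x) := by rwa [← hf.map_nhds_eq_of_surj hsurj, Filter.mem_map]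
  exact notMem_empty (f x) (hs ▸ mem_interior_iff_mem_nhds.2 this)

theorem not_mapsTo_frontier_of_contDiffOn {s U : Set E} (hs : IsCompact s) (hconv : Convex ℝ s)
    (hne : (interior s).Nonempty) (hU : IsOpen U) (hsU : s ⊆ U) {f : E → E}
    (hf : ContDiffOn ℝ 1 f U) (hid : EqOn f id (frontier s)) : ¬ MapsTo f U (frontier s) := by
  intro hmaps
  borelize E
  let μ : Measure E := Measure.addHaar
  have f_deriv : ∀ x ∈ s, HasFDerivAt f (fderiv ℝ f x) x := fun x hx =>
    ((hf.differentiableOn one_ne_zero).differentiableAt (hU.mem_nhds (hsU hx))).hasFDerivAt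
  have integral_eq : ∫ x in s, (ContinuousLinearMap.id ℝ E +
      (fderiv ℝ f x - ContinuousLinearMap.id ℝ E)).det ∂μ = μ.real s :=
    setIntegral_det_id_add_eq_measureReal μ hs hconv (g := fun x => f x - x)
      (fun x hx => ((f_deriv x hx).sub (hasFDerivAt_id x)).hasFDerivWithinAt)
      (((hf.continuousOn_fderiv_of_isOpen hU le_rfl).mono hsU).sub continuousOn_const)
      fun x hx => sub_eq_zero.2 (hid hx)
  have integral_eq_zero : ∫ x in s, (ContinuousLinearMap.id ℝ E +
      (fderiv ℝ f x - ContinuousLinearMap.id ℝ E)).det ∂μ = 0 := by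
    refine setIntegral_eq_zero_of_forall_eq_zero fun x hx => ?_
    rw [add_sub_cancel]
    exact det_eq_zero_of_hasStrictFDerivAt_of_eventually_mem
      ((hf.contDiffAt (hU.mem_nhds (hsU hx))).hasStrictFDerivAt one_ne_zero)
      (interior_frontier hs.isClosed) (Filter.eventually_of_mem (hU.mem_nhds (hsU hx)) hmaps)
  have measure_pos : 0 < μ.real s :=
    ENNReal.toReal_pos (μ.measure_pos_of_nonempty_interior hne).ne' hs.measure_lt_top.ne
  exact measure_pos.ne' (integral_eq.symm.trans integral_eq_zero)

end SmoothNoRetraction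

section Brouwer

open scoped RealInnerProductSpace

variable {E : Type*} [NormedAddCommGroup E] [InnerProductSpace ℝ E]

/-- A quarter of the discriminant of the quadratic equation `‖x + s • u‖ ^ 2 = 1` in `s`. -/
def rayDiscrim (x u : E) : ℝ := ⟪x, u⟫ ^ 2 + ‖u‖ ^ 2 * (1 - ‖x‖ ^ 2)

/-- The point at which the ray from `x` in the direction `u` leaves the unit ball, given by the
larger root `s` of `‖x + s • u‖ ^ 2 = 1`; it is meaningful if `u ≠ 0` and `0 ≤ rayDiscrim x u`. -/
def rayExit (x u : E) : E := x + ((-⟪x, u⟫ + √(rayDiscrim x u)) / ‖u‖ ^ 2) • u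

lemma norm_rayExit {x u : E} (hu : u ≠ 0) (h : 0 ≤ rayDiscrim x u) : ‖rayExit x u‖ = 1 := by
  have hu' : ‖u‖ ≠ 0 := norm_ne_zero_iff.2 hu
  have hsqrt : √(rayDiscrim x u) ^ 2 = ⟪x, u⟫ ^ 2 + ‖u‖ ^ 2 * (1 - ‖x‖ ^ 2) := Real.sq_sqrt h
  rw [← sq_eq_sq₀ (norm_nonneg _) zero_le_one, rayExit, norm_add_sq_real, inner_smul_right,
    norm_smul, mul_pow, Real.norm_eq_abs, sq_abs]
  field_simp
  linear_combination hsqrt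

lemma rayExit_eq_self {x u : E} (hx : ‖x‖ = 1) (hu : 0 ≤ ⟪x, u⟫) : rayExit x u = x := by
  simp [rayExit, rayDiscrim, hx, Real.sqrt_sq hu]

lemma inner_sub_right_pos_of_norm_eq_one {x y : E} (hx : ‖x‖ = 1) (hy : ‖y‖ ≤ 1) (hxy : x ≠ y) :
    0 < ⟪x, x - y⟫ := by
  have hdist : 0 < ‖x - y‖ := norm_sub_pos_iff.2 hxy
  have hsq := norm_sub_sq_real x y
  rw [inner_sub_right, real_inner_self_eq_norm_sq]
  rw [hx] at hsq ⊢
  nlinarith [norm_nonneg y]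

lemma rayDiscrim_sub_pos {x y : E} (hx : ‖x‖ ≤ 1) (hy : ‖y‖ ≤ 1) (hxy : x ≠ y) :
    0 < rayDiscrim x (x - y) := by
  rcases hx.eq_or_lt with hx | hx
  · have := inner_sub_right_pos_of_norm_eq_one hx hy hxy
    rw [rayDiscrim, hx]
    norm_num
    positivity
  · have hdist : 0 < ‖x - y‖ := norm_sub_pos_iff.2 hxy
    have : 0 < 1 - ‖x‖ ^ 2 := by nlinarith [norm_nonneg x]
    rw [rayDiscrim]
    positivity

lemma contDiff_rayDiscrim {n : WithTop ℕ∞} : ContDiff ℝ n fun p : E × E => rayDiscrim p.1 p.2 :=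
  ((contDiff_fst.inner ℝ contDiff_snd).pow 2).add
    ((contDiff_snd.norm_sq ℝ).mul (contDiff_const.sub (contDiff_fst.norm_sq ℝ)))

lemma contDiffOn_rayExit {n : WithTop ℕ∞} :
    ContDiffOn ℝ n (fun p : E × E => rayExit p.1 p.2) {p | p.2 ≠ 0 ∧ 0 < rayDiscrim p.1 p.2} := by
  have hsqrt : ContDiffOn ℝ n (fun p : E × E => √(rayDiscrim p.1 p.2))
      {p | p.2 ≠ 0 ∧ 0 < rayDiscrim p.1 p.2} :=
    contDiff_rayDiscrim.contDiffOn.sqrt fun p hp => hp.2.ne'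
  have hnorm : ContDiffOn ℝ n (fun p : E × E => ‖p.2‖ ^ 2)
      {p | p.2 ≠ 0 ∧ 0 < rayDiscrim p.1 p.2} := (contDiff_snd.norm_sq ℝ).contDiffOn
  exact contDiff_fst.contDiffOn.add
    ((((contDiff_fst.inner ℝ contDiff_snd).neg.contDiffOn.add hsqrt).div hnorm
      fun p hp => pow_ne_zero 2 (norm_ne_zero_iff.2 hp.1)).smul contDiff_snd.contDiffOn)

variable [FiniteDimensional ℝ E]

lemma exists_isFixedPt_of_contDiff_mapsTo_closedBall {φ : E → E} (hφ : ContDiff ℝ 1 φ)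
    (hmaps : MapsTo φ (closedBall 0 1) (closedBall 0 1)) :
    ∃ x ∈ closedBall (0 : E) 1, Function.IsFixedPt φ x := by
  by_contra! hne
  have φ_norm : ∀ x, ‖x‖ ≤ 1 → ‖φ x‖ ≤ 1 := fun x hx =>
    mem_closedBall_zero_iff.1 (hmaps (mem_closedBall_zero_iff.2 hx))
  have φ_ne : ∀ x, ‖x‖ ≤ 1 → x ≠ φ x := fun x hx =>
    Ne.symm (hne x (mem_closedBall_zero_iff.2 hx))
  let ray : E → E × E := fun x => (x, x - φ x)
  have ray_contDiff : ContDiff ℝ 1 ray := contDiff_id.prodMk (contDiff_id.sub hφ)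
  let U : Set E := ray ⁻¹' {p | p.2 ≠ 0 ∧ 0 < rayDiscrim p.1 p.2}
  have U_open : IsOpen U :=
    ((isOpen_ne_fun continuous_snd continuous_const).inter
      (isOpen_lt continuous_const (contDiff_rayDiscrim (n := 0)).continuous)).preimage
      ray_contDiff.continuous
  have ball_subset : closedBall 0 1 ⊆ U := fun x hx => by
    rw [mem_closedBall_zero_iff] at hx
    exact ⟨sub_ne_zero.2 (φ_ne x hx), rayDiscrim_sub_pos hx (φ_norm x hx) (φ_ne x hx)⟩
  refine not_mapsTo_frontier_of_contDiffOn (isCompact_closedBall (0 : E) 1)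
    (convex_closedBall 0 1) ⟨0, ball_subset_interior_closedBall (mem_ball_self one_pos)⟩ U_open
    ball_subset (contDiffOn_rayExit.comp ray_contDiff.contDiffOn (mapsTo_preimage ray _)) ?_ ?_
  all_goals rw [frontier_closedBall 0 one_ne_zero]
  · intro x hx
    rw [mem_sphere_zero_iff_norm] at hx
    exact rayExit_eq_self hx
      (inner_sub_right_pos_of_norm_eq_one hx (φ_norm x hx.le) (φ_ne x hx.le)).le
  · exact fun x hx => mem_sphere_zero_iff_norm.2 (norm_rayExit hx.1 hx.2.le)

lemma exists_dist_le_of_continuous_mapsTo_closedBall {φ : E → E} (hφ : Continuous φ)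
    (hmaps : ∀ x, φ x ∈ closedBall 0 1) {ε : ℝ} (hε : 0 < ε) :
    ∃ x ∈ closedBall (0 : E) 1, dist (φ x) x ≤ 2 * ε := by
  obtain ⟨g, g_contDiff, g_dist, -⟩ := hφ.exists_contDiff_approx 1 (ε := fun _ => ε)
    continuous_const fun _ => hε
  have g_norm : ∀ x, ‖g x‖ ≤ 1 + ε := fun x => calc
    ‖g x‖ ≤ ‖φ x‖ + ‖g x - φ x‖ := norm_le_norm_add_norm_sub' _ _
    _ ≤ 1 + ε := add_le_add (mem_closedBall_zero_iff.1 (hmaps x))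
      (dist_eq_norm (g x) (φ x) ▸ (g_dist x).le)
  have hpos : 0 < 1 + ε := by positivity
  obtain ⟨x, hx, hfix⟩ := exists_isFixedPt_of_contDiff_mapsTo_closedBall
    (φ := fun x => (1 + ε)⁻¹ • g x) (contDiff_const.smul (by exact_mod_cast g_contDiff))
    fun x _ => by
      rw [mem_closedBall_zero_iff, norm_smul, norm_inv, Real.norm_of_nonneg hpos.le,
        inv_mul_le_one₀ hpos]
      exact g_norm x
  have g_eq : g x = (1 + ε) • x := (inv_smul_eq_iff₀ hpos.ne').1 hfix
  refine ⟨x, hx, ?_⟩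
  calc
    dist (φ x) x ≤ dist (φ x) (g x) + dist (g x) x := dist_triangle _ _ _
    _ ≤ ε + ε * ‖x‖ := by
      gcongr
      · exact (dist_comm _ _).trans_le (g_dist x).le
      · rw [g_eq, dist_eq_norm, add_smul, one_smul, add_sub_cancel_left, norm_smul,
          Real.norm_of_nonneg hε.le]
    _ ≤ 2 * ε := by nlinarith [mem_closedBall_zero_iff.1 hx]

theorem exists_isFixedPt_of_continuousOn_mapsTo_closedBall {φ : E → E}
    (hφ : ContinuousOn φ (closedBall 0 1)) (hmaps : MapsTo φ (closedBall 0 1) (closedBall 0 1)) :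
    ∃ x ∈ closedBall (0 : E) 1, Function.IsFixedPt φ x := by
  have := Metric.instTietzeExtensionClosedBall ℝ (0 : E) one_pos
  obtain ⟨ψ, ψ_mem, hψ⟩ := ContinuousMap.exists_forall_mem_restrict_eq isClosed_closedBall
    ⟨_, hφ.domRestrict⟩ fun x : closedBall (0 : E) 1 => hmaps x.2
  have ψ_eq : EqOn ψ φ (closedBall 0 1) := fun x hx => DFunLike.congr_fun hψ ⟨x, hx⟩
  obtain ⟨x, hx, hmin⟩ := (isCompact_closedBall (0 : E) 1).exists_isMinOn ⟨0, by simp⟩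
    (ψ.continuous.dist continuous_id).continuousOn
  refine ⟨x, hx, (ψ_eq hx).symm.trans
    (dist_le_zero.1 (le_of_forall_pos_le_add fun ε hε => ?_))⟩
  obtain ⟨y, hy, hyε⟩ := exists_dist_le_of_continuous_mapsTo_closedBall ψ.continuous ψ_mem
    (half_pos hε)
  calc
    dist (ψ x) x ≤ dist (ψ y) y := hmin hy
    _ ≤ 0 + ε := by linarith

lemma exists_eq_zero_of_norm_sub_le_one {h : E → E} (hc : ContinuousOn h (closedBall 0 1))
    (hB : ∀ x ∈ closedBall 0 1, ‖h x - x‖ ≤ 1) : ∃ x ∈ closedBall (0 : E) 1, h x = 0 := by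
  obtain ⟨x, hx, hfix⟩ := exists_isFixedPt_of_continuousOn_mapsTo_closedBall
    (φ := fun x => x - h x) (continuousOn_id.sub hc) fun x hx => by
      rw [mem_closedBall_zero_iff, norm_sub_rev]
      exact hB x hx
  exact ⟨x, hx, sub_eq_self.1 hfix⟩

end Brouwer

section InvarianceOfDomain

universe u v

lemma exists_continuous_leftInvOn {X : Type v} {Y : Type u} [TopologicalSpace X]
    [TietzeExtension.{u, v} X] [TopologicalSpace Y] [T2Space Y] [NormalSpace Y] {f : X → Y}
    {s : Set X} (hs : IsCompact s) (hf : ContinuousOn f s) (hinj : InjOn f s) :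
    ∃ g : Y → X, Continuous g ∧ LeftInvOn g f s := by
  have := isCompact_iff_compactSpace.1 hs
  obtain ⟨g, hg⟩ := ContinuousMap.exists_extension'
    ((continuousOn_iff_continuous_domRestrict.1 hf).isClosedEmbedding (injOn_iff_injective.1 hinj))
    ⟨((↑) : s → X), continuous_subtype_val⟩
  exact ⟨g, g.continuous, fun x hx => congrFun hg ⟨x, hx⟩⟩

section NormedSpace

variable {E : Type*} [NormedAddCommGroup E] [NormedSpace ℝ E]

lemma exists_continuous_dist_lt_ne_zero_of_measure_eq_zero [FiniteDimensional ℝ E]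
    [MeasurableSpace E] [BorelSpace E] (μ : Measure E) [μ.IsAddHaarMeasure] {t : Set E}
    (ht : μ t = 0) {g : E → E} (hg : Continuous g) {δ : ℝ} (hδ : 0 < δ) :
    ∃ q : E → E, Continuous q ∧ (∀ y, dist (q y) (g y) < δ) ∧ ∀ y ∈ t, q y ≠ 0 := by
  obtain ⟨p, p_contDiff, p_dist, -⟩ := hg.exists_contDiff_approx 1 (ε := fun _ => δ / 2)
    continuous_const fun _ => half_pos hδ
  have p_differentiable : Differentiable ℝ p := p_contDiff.differentiable (by norm_num)
  have image_null : μ (p '' t) = 0 :=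
    addHaar_image_eq_zero_of_differentiableOn_of_addHaar_eq_zero μ
      p_differentiable.differentiableOn ht
  obtain ⟨v, hv, hvt⟩ : ∃ v ∈ ball (0 : E) (δ / 2), v ∉ p '' t := by
    by_contra! h
    exact (measure_ball_pos μ 0 (half_pos hδ)).ne' (measure_mono_null h image_null)
  refine ⟨fun y => p y - v, p_differentiable.continuous.sub continuous_const, fun y => ?_,
    fun y hy h => hvt ⟨y, hy, sub_eq_zero.1 h⟩⟩
  calc
    dist (p y - v) (g y) ≤ dist (p y - v) (p y) + dist (p y) (g y) := dist_triangle _ _ _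
    _ < δ / 2 + δ / 2 := by
      gcongr
      · simpa [dist_eq_norm] using hv
      · exact p_dist y
    _ = δ := add_halves δ

lemma exists_continuous_dist_lt_ne_zero [FiniteDimensional ℝ E] [MeasurableSpace E] [BorelSpace E]
    (μ : Measure E) [μ.IsAddHaarMeasure] {t : Set E} (ht : μ t = 0) {g : E → E} (hg : Continuous g)
    {k : Set E} (hk : IsCompact k) (hgk : ∀ y ∈ k, g y ≠ 0) {δ : ℝ} (hδ : 0 < δ) :
    ∃ q : E → E, Continuous q ∧ (∀ y, dist (q y) (g y) < δ) ∧ ∀ y ∈ k ∪ t, q y ≠ 0 := by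
  obtain ⟨m, m_pos, hm⟩ : ∃ m > 0, ∀ y ∈ k, m ≤ ‖g y‖ := by
    rcases k.eq_empty_or_nonempty with rfl | hne
    · exact ⟨1, one_pos, by simp⟩
    · obtain ⟨y, hy, hmin⟩ := hk.exists_isMinOn hne hg.norm.continuousOn
      exact ⟨‖g y‖, norm_pos_iff.2 (hgk y hy), fun z hz => hmin hz⟩
  obtain ⟨q, q_continuous, q_dist, hqt⟩ :=
    exists_continuous_dist_lt_ne_zero_of_measure_eq_zero μ ht hg (lt_min hδ m_pos)
  refine ⟨q, q_continuous, fun y => (q_dist y).trans_le (min_le_left _ _), fun y hy hqy => ?_⟩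
  rcases hy with hy | hy
  · have hlt : ‖g y‖ < m := by
      simpa [hqy] using (q_dist y).trans_le (min_le_right _ _)
    exact hlt.not_ge (hm y hy)
  · exact hqt y hy hqy

/-- The retraction of `{c}ᶜ` onto the complement of `ball c ε` which pushes the points of the
punctured ball radially onto the sphere. -/
def pushToSphere (c : E) (ε : ℝ) (y : E) : E := c + max (ε / ‖y - c‖) 1 • (y - c)

lemma continuousOn_pushToSphere (c : E) (ε : ℝ) : ContinuousOn (pushToSphere c ε) {c}ᶜ := by
  have hnorm : ContinuousOn (fun y : E => ε / ‖y - c‖) {c}ᶜ :=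
    continuousOn_const.div (by fun_prop) fun y hy => norm_ne_zero_iff.2 (sub_ne_zero.2 hy)
  exact continuousOn_const.add ((hnorm.sup continuousOn_const).smul (by fun_prop))

lemma pushToSphere_eq_self {c y : E} {ε : ℝ} (hy : y ∉ ball c ε) : pushToSphere c ε y = y := by
  rw [mem_ball, dist_eq_norm, not_lt] at hy
  simp [pushToSphere, div_le_one_of_le₀ hy (norm_nonneg _)]

lemma pushToSphere_mem_sphere {c y : E} {ε : ℝ} (hy : y ∈ ball c ε) (hyc : y ≠ c) :
    pushToSphere c ε y ∈ sphere c ε := by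
  have hpos : 0 < ‖y - c‖ := norm_sub_pos_iff.2 hyc
  rw [mem_ball, dist_eq_norm] at hy
  have hε : 0 < ε := hpos.trans hy
  rw [mem_sphere, dist_eq_norm, pushToSphere, max_eq_left ((one_le_div hpos).2 hy.le),
    add_sub_cancel_left, norm_smul, Real.norm_of_nonneg (by positivity), div_mul_cancel₀ _ hpos.ne']

end NormedSpace

variable {E : Type*} [NormedAddCommGroup E] [InnerProductSpace ℝ E] [FiniteDimensional ℝ E]

lemma mem_image_closedBall_of_leftInvOn {f g : E → E} (hf : ContinuousOn f (closedBall 0 1))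
    (hg : Continuous g) (hgf : LeftInvOn g f (closedBall 0 1)) {c : E} {ε : ℝ}
    (hc : f 0 ∈ ball c ε) (hsmall : ∀ y ∈ closedBall c ε, ‖g y‖ ≤ 1 / 4) :
    c ∈ f '' closedBall 0 1 := by
  by_contra hcf
  borelize E
  have hε : 0 < ε := pos_of_mem_ball hc
  obtain ⟨q, q_continuous, q_dist, q_ne_zero⟩ := exists_continuous_dist_lt_ne_zero
    (Measure.addHaar : Measure E) (Measure.addHaar_sphere_of_ne_zero _ c hε.ne') hg
    (((isCompact_closedBall 0 1).image_of_continuousOn hf).diff (isOpen_ball (x := c) (ε := ε)))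
    (by
      rintro _ ⟨⟨x, hx, rfl⟩, hxc⟩ hx0
      rw [hgf hx] at hx0
      exact hxc (hx0 ▸ hc)) (δ := 1 / 4) (by norm_num)
  have hfc : ∀ x ∈ closedBall 0 1, f x ≠ c := fun x hx h => hcf ⟨x, hx, h⟩
  have push_mem : ∀ x ∈ closedBall 0 1,
      pushToSphere c ε (f x) ∈ f '' closedBall 0 1 \ ball c ε ∪ sphere c ε := by
    intro x hx
    by_cases hxc : f x ∈ ball c ε
    · exact .inr (pushToSphere_mem_sphere hxc (hfc x hx))
    · exact .inl ((pushToSphere_eq_self hxc).symm ▸ ⟨mem_image_of_mem f hx, hxc⟩)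
  have push_dist : ∀ x ∈ closedBall 0 1, ‖g (pushToSphere c ε (f x)) - x‖ ≤ 1 / 4 + 1 / 4 := by
    intro x hx
    by_cases hxc : f x ∈ ball c ε
    · have hgx := hsmall (f x) (ball_subset_closedBall hxc)
      rw [hgf hx] at hgx
      exact norm_sub_le_of_le (hsmall _ (sphere_subset_closedBall
        (pushToSphere_mem_sphere hxc (hfc x hx)))) hgx
    · rw [pushToSphere_eq_self hxc, hgf hx, sub_self, norm_zero]
      norm_num
  obtain ⟨x, hx, hzero⟩ := exists_eq_zero_of_norm_sub_le_one
    (h := fun x => q (pushToSphere c ε (f x)))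
    (q_continuous.comp_continuousOn ((continuousOn_pushToSphere c ε).comp hf hfc)) fun x hx => by
      have := norm_sub_le_norm_sub_add_norm_sub (q (pushToSphere c ε (f x)))
        (g (pushToSphere c ε (f x))) x
      linarith [push_dist x hx, dist_eq_norm (q (pushToSphere c ε (f x))) _ ▸ q_dist _]
  exact q_ne_zero _ (push_mem x hx) hzero

lemma image_closedBall_mem_nhds {f : E → E} (hf : ContinuousOn f (closedBall 0 1))
    (hinj : InjOn f (closedBall 0 1)) : f '' closedBall 0 1 ∈ 𝓝 (f 0) := by
  obtain ⟨g, hg, hgf⟩ := exists_continuous_leftInvOn (isCompact_closedBall 0 1) hf hinj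
  have hg0 : g (f 0) = 0 := hgf (mem_closedBall_self zero_le_one)
  obtain ⟨η, hη, hsmall⟩ : ∃ η > 0, ∀ y ∈ ball (f 0) η, ‖g y‖ < 1 / 4 := by
    simpa [hg0] using Metric.continuous_iff.1 hg (f 0) (1 / 4) (by norm_num)
  refine Filter.mem_of_superset (ball_mem_nhds (f 0) (by positivity : 0 < η / 2)) fun c hc =>
    mem_image_closedBall_of_leftInvOn hf hg hgf (mem_ball_comm.1 hc) fun y hy =>
      (hsmall y ?_).le
  calc
    dist y (f 0) ≤ dist y c + dist c (f 0) := dist_triangle _ _ _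
    _ < η / 2 + η / 2 := add_lt_add_of_le_of_lt hy hc
    _ = η := add_halves η

theorem isOpen_image_of_continuousOn_injOn {f : E → E} {U : Set E} (hU : IsOpen U)
    (hf : ContinuousOn f U) (hinj : InjOn f U) : IsOpen (f '' U) := by
  rw [isOpen_iff_mem_nhds]
  rintro _ ⟨x, hx, rfl⟩
  obtain ⟨r, hr, hrU⟩ := nhds_basis_closedBall.mem_iff.1 (hU.mem_nhds hx)
  let scale : E → E := fun z => x + r • z
  have scale_mapsTo : MapsTo scale (closedBall 0 1) U := fun z hz => hrU <| by
    rw [mem_closedBall_zero_iff] at hz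
    simpa [scale, norm_smul, abs_of_pos hr] using mul_le_of_le_one_right hr.le hz
  have scale_injective : Function.Injective scale :=
    (add_right_injective x).comp (smul_right_injective E hr.ne')
  have hmem := image_closedBall_mem_nhds (f := f ∘ scale) (hf.comp (by fun_prop) scale_mapsTo)
    (hinj.comp scale_injective.injOn scale_mapsTo)
  rw [image_comp] at hmem
  simpa [scale] using Filter.mem_of_superset hmem (image_mono scale_mapsTo.image_subset)

end InvarianceOfDomain

section LocallyInjectsInto

/-- Every point of `X` has an open neighborhood with a continuous injection into `E`. This is all
that invariance of domain needs to know about an `n`-manifold with boundary, with `E = ℝⁿ`. The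
injection is encoded as a globally defined function. -/
def LocallyInjectsInto (X E : Type*) [TopologicalSpace X] [TopologicalSpace E] : Prop :=
  ∀ x : X, ∃ W : Set X, IsOpen W ∧ x ∈ W ∧ ∃ k : X → E, ContinuousOn k W ∧ InjOn k W

lemma LocallyHalfSpace.locallyInjectsInto {n : ℕ} {hn : 1 ≤ n} {M : Type} [TopologicalSpace M]
    (hM : LocallyHalfSpace hn M) : LocallyInjectsInto M (EuclideanSpace ℝ (Fin n)) := by
  intro x
  obtain ⟨W, V, hxW, hW, -, ⟨e⟩⟩ := hM x
  let chart : W → EuclideanSpace ℝ (Fin n) := fun w => (e w : HalfSpace hn)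
  have chart_continuous : Continuous chart :=
    continuous_subtype_val.comp (continuous_subtype_val.comp e.continuous)
  have chart_injective : Function.Injective chart :=
    Subtype.val_injective.comp (Subtype.val_injective.comp e.injective)
  have domRestrict_extend : W.domRestrict (Function.extend (↑) chart 0) = chart :=
    funext (Subtype.val_injective.extend_apply chart 0)
  exact ⟨W, hW, hxW, Function.extend (↑) chart 0,
    continuousOn_iff_continuous_domRestrict.2 (domRestrict_extend.symm ▸ chart_continuous),
    injOn_iff_injective.2 (domRestrict_extend.symm ▸ chart_injective)⟩

variable {X E : Type*} [TopologicalSpace X] [NormedAddCommGroup E]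

lemma exists_subset_nonempty_homeomorph [NormedSpace ℝ E] {U N : Set X} (e : U ≃ₜ E) {x : X}
    (hxU : x ∈ U) (hN : N ∈ 𝓝 x) : ∃ V ⊆ U ∩ N, x ∈ V ∧ Nonempty (V ≃ₜ E) := by
  have preimage_mem : (fun z => (e.symm z : X)) ⁻¹' N ∈ 𝓝 (e ⟨x, hxU⟩) :=
    (continuous_subtype_val.comp e.symm.continuous).continuousAt.preimage_mem_nhds (by simpa)
  obtain ⟨r, hr, hrN⟩ := Metric.mem_nhds_iff.1 preimage_mem
  let b := OpenPartialHomeomorph.univBall (e ⟨x, hxU⟩) r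
  have b_source : b.source = univ := OpenPartialHomeomorph.univBall_source _ _
  have b_target : b.target = ball (e ⟨x, hxU⟩) r := OpenPartialHomeomorph.univBall_target _ hr
  let j : E → X := fun z => e.symm (b z)
  have j_embedding : IsEmbedding j := IsEmbedding.subtypeVal.comp
    (e.symm.isEmbedding.comp (b.isOpenEmbedding b_source).isEmbedding)
  refine ⟨range j, ?_, ⟨0, by simp [j, b]⟩, ⟨j_embedding.toHomeomorph.symm⟩⟩
  rintro _ ⟨z, rfl⟩
  exact ⟨(e.symm (b z)).2, hrN (b_target ▸ b.map_source (b_source ▸ mem_univ z))⟩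

variable [InnerProductSpace ℝ E] [FiniteDimensional ℝ E]

theorem isOpen_range_of_injective (hX : LocallyInjectsInto X E) {i : E → X}
    (hi : Continuous i) (hinj : Function.Injective i) : IsOpen (range i) := by
  rw [isOpen_iff_mem_nhds]
  rintro _ ⟨z, rfl⟩
  obtain ⟨W, hW, hzW, k, hk, hkinj⟩ := hX (i z)
  have image_open : IsOpen ((k ∘ i) '' (i ⁻¹' W)) :=
    isOpen_image_of_continuousOn_injOn (hW.preimage hi)
      (hk.comp hi.continuousOn (mapsTo_preimage i W)) (hkinj.comp hinj.injOn (mapsTo_preimage i W))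
  refine Filter.mem_of_superset ((hk.isOpen_inter_preimage hW image_open).mem_nhds
    ⟨hzW, mem_image_of_mem _ hzW⟩) ?_
  rintro y ⟨hyW, w, hw, hwy⟩
  exact ⟨w, hkinj hw hyW hwy⟩

lemma isOpen_of_homeomorph (hX : LocallyInjectsInto X E) {U : Set X} (e : U ≃ₜ E) : IsOpen U := by
  have := isOpen_range_of_injective hX (continuous_subtype_val.comp e.symm.continuous)
    (Subtype.val_injective.comp e.symm.injective)
  rwa [e.symm.surjective.range_comp, Subtype.range_coe] at this

end LocallyInjectsInto

section ManifoldInterior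

variable {n : ℕ} {M : Type} [TopologicalSpace M]

lemma mInt_eq_interior_inter_mInt_univ (hM : LocallyInjectsInto M (EuclideanSpace ℝ (Fin n)))
    (S : Set M) : mInt n S = interior S ∩ mInt n univ := by
  ext x
  constructor
  · rintro ⟨-, U, hxU, hUS, -, ⟨e⟩⟩
    have hU : IsOpen U := isOpen_of_homeomorph hM e
    exact ⟨interior_maximal hUS hU hxU, trivial, U, hxU, subset_univ U,
      hU.preimage continuous_subtype_val, ⟨e⟩⟩
  · rintro ⟨hxS, -, U, hxU, -, -, ⟨e⟩⟩
    obtain ⟨V, hV, hxV, ⟨e'⟩⟩ := exists_subset_nonempty_homeomorph e hxU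
      (mem_interior_iff_mem_nhds.1 hxS)
    exact ⟨interior_subset hxS, V, hxV, hV.trans inter_subset_right,
      (isOpen_of_homeomorph hM e').preimage continuous_subtype_val, ⟨e'⟩⟩

theorem mInt_inter_eq_general (hM : LocallyInjectsInto M (EuclideanSpace ℝ (Fin n)))
    (A B : Set M) : mInt n A ∩ mInt n B = mInt n (A ∩ B) := by
  rw [mInt_eq_interior_inter_mInt_univ hM A, mInt_eq_interior_inter_mInt_univ hM B,
    mInt_eq_interior_inter_mInt_univ hM (A ∩ B), interior_inter, ← inter_inter_distrib_right]

end ManifoldInterior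

/-- Claim (1) in the proof of Proposition 1.2.1:
`Int(A) ∩ Int(B) = Int(C)` for a splitting `M = A ∪_C B` into closed `n`-balls. -/
theorem mInt_inter_eq (n : ℕ) (hn : 1 ≤ n)
    (M : Type) [TopologicalSpace M] [T2Space M] (hM : LocallyHalfSpace hn M)
    (A B C : Set M) (hAB : A ∪ B = Set.univ) (hABC : A ∩ B = C)
    (hA : Nonempty (↥A ≃ₜ ↥(Metric.closedBall (0 : EuclideanSpace ℝ (Fin n)) 1)))
    (hB : Nonempty (↥B ≃ₜ ↥(Metric.closedBall (0 : EuclideanSpace ℝ (Fin n)) 1)))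
    (hC : Nonempty (↥C ≃ₜ ↥(Metric.closedBall (0 : EuclideanSpace ℝ (Fin n)) 1))) :
    mInt n A ∩ mInt n B = mInt n C :=
  hABC ▸ mInt_inter_eq_general hM.locallyInjectsInto A B
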